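/- arXiv:1805.03163 — 9 statements merged into one kernel-verified Lean document; each statement's English description precedes it below -/
import Mathlib

section
/- Let F : (Fin n → Bool) → (Fin n → Bool) be monotone with respect to the pointwise order. If X is a periodic point of F (there exists p ≥ 1 with F^[p] X = X) and Y = F^[j] X for some j with Y ≠ X, then X and Y are incomparable: neither X ≤ Y nor Y ≤ X. (That is, the states contained in a limit cycle form an antichain.) -/
/-!
The iterates of a monotone map `f` starting at `x` ascend if `x ≤ f x` and descend if `f x ≤ x`.
If they return to `x`, then either of these inequalities implies the other. A periodic point of `f`
is also periodic under `f^[j]`, so the same holds with `f^[j]` in place of `f`, and antisymmetry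
shows that a point `f^[j] x` comparable with `x` equals `x`.
-/

open Function

section Preorder

variable {α : Type*} [Preorder α] {f : α → α} {x : α} {p : ℕ}

theorem map_le_of_le_map_of_isPeriodicPt (hf : Monotone f) (hp : 0 < p)
    (hx : IsPeriodicPt f p x) (h : x ≤ f x) : f x ≤ x :=
  calc
    f x ≤ f^[p] x := hf.monotone_iterate_of_le_map h hp
    _ = x := hx

theorem le_map_iff_map_le_of_isPeriodicPt (hf : Monotone f) (hp : 0 < p)
    (hx : IsPeriodicPt f p x) : x ≤ f x ↔ f x ≤ x :=
  ⟨map_le_of_le_map_of_isPeriodicPt hf hp hx,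
    map_le_of_le_map_of_isPeriodicPt (α := αᵒᵈ) hf.dual hp hx⟩

theorem le_iterate_iff_iterate_le_of_isPeriodicPt (hf : Monotone f) (hp : 0 < p)
    (hx : IsPeriodicPt f p x) (j : ℕ) : x ≤ f^[j] x ↔ f^[j] x ≤ x :=
  le_map_iff_map_le_of_isPeriodicPt (hf.iterate j) hp (hx.iterate j)

end Preorder

theorem stmt_1_general {α : Type*} [PartialOrder α] {f : α → α} (hf : Monotone f) {x : α} {p : ℕ}
    (hp : 0 < p) (hx : IsPeriodicPt f p x) {j : ℕ} (hne : f^[j] x ≠ x) :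
    ¬ x ≤ f^[j] x ∧ ¬ f^[j] x ≤ x := by
  have hiff : x ≤ f^[j] x ↔ f^[j] x ≤ x := le_iterate_iff_iterate_le_of_isPeriodicPt hf hp hx j
  exact ⟨fun h => hne ((hiff.mp h).antisymm h), fun h => hne (h.antisymm (hiff.mpr h))⟩

theorem stmt_1 {n : ℕ}
    (F : (Fin n → Bool) → (Fin n → Bool)) (hF : Monotone F)
    (X Y : Fin n → Bool) (p : ℕ) (hp : 1 ≤ p) (hper : F^[p] X = X)
    (j : ℕ) (hY : Y = F^[j] X) (hne : Y ≠ X) :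
    ¬ X ≤ Y ∧ ¬ Y ≤ X := by
  subst hY
  exact stmt_1_general hF hp hper hne
end

section
/- Let (F_i)_{i : Fin n} be a family of monotone coordinate-update maps on Fin n → Bool, let π be a permutation of Fin n, and suppose Z is a fixed point of F_π (F_π Z = Z). If X ≤ Z, then for every permutation σ of Fin n and every k ≥ 0, F_σ^[k] X ≤ Z; dually, if Z ≤ X, then Z ≤ F_σ^[k] X for every σ and k. -/
/-- The SDS map `F_{π(n-1)} ∘ ⋯ ∘ F_{π(1)} ∘ F_{π(0)}`: vertex `π 0` is updated first. -/
def seqComp {n : ℕ} (F : Fin n → (Fin n → Bool) → (Fin n → Bool))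
    (π : Equiv.Perm (Fin n)) (X : Fin n → Bool) : Fin n → Bool :=
  (List.finRange n).foldl (fun Y i => F (π i) Y) X

/-!
A sequential update by a word without repeated letters changes each coordinate at most once. If it
fixes `Z`, the change made to coordinate `i` is therefore never undone, so every update occurring
in the word already fixes `Z`. By monotonicity each of these updates preserves the down-set and
the up-set of `Z`, hence so does any composition of them, in any order and with any repetitions.
-/

open Function Set

/-- The map of a sequential dynamical system whose update schedule is the word `w`: the maps `F i`
are applied for the letters `i` of `w` in turn, the head of `w` first. Schedules are lists, so
letters may be missing or repeated; a permutation schedule is a list of all vertices without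
repetition. -/
def sequentialUpdate {ι S : Type*} (F : ι → S → S) (w : List ι) (X : S) : S :=
  w.foldl (fun Y i => F i Y) X

theorem seqComp_eq_sequentialUpdate {n : ℕ} (F : Fin n → (Fin n → Bool) → (Fin n → Bool))
    (π : Equiv.Perm (Fin n)) :
    seqComp F π = sequentialUpdate F ((List.finRange n).map π) := by
  funext X
  rw [seqComp, sequentialUpdate, List.foldl_map]

namespace sequentialUpdate

theorem mapsTo {ι S : Type*} {F : ι → S → S} {w : List ι} {s : Set S}
    (hs : ∀ i ∈ w, MapsTo (F i) s s) : MapsTo (sequentialUpdate F w) s s :=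
  fun _ hX => List.foldlRecOn w _ hX fun _ hY i hi => hs i hi hY

variable {ι : Type*} {α : ι → Type*} {F : ι → (∀ i, α i) → ∀ i, α i} {w : List ι}

theorem apply_of_notMem (hupd : ∀ i X j, j ≠ i → F i X j = X j) {j : ι} (hj : j ∉ w)
    (X : ∀ i, α i) : sequentialUpdate F w X j = X j := by
  induction w generalizing X with
  | nil => rfl
  | cons i w ih =>
    obtain ⟨hji, hjw⟩ := List.ne_and_not_mem_of_not_mem_cons hj
    exact (ih hjw (F i X)).trans (hupd i X j hji)

theorem isFixedPt_of_mem (hupd : ∀ i X j, j ≠ i → F i X j = X j) (hw : w.Nodup)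
    {Z : ∀ i, α i} (hZ : IsFixedPt (sequentialUpdate F w) Z) {i : ι} (hi : i ∈ w) :
    IsFixedPt (F i) Z := by
  induction w with
  | nil => cases hi
  | cons a w ih =>
    obtain ⟨haw, hw⟩ := List.nodup_cons.mp hw
    have hZ_cons : sequentialUpdate F w (F a Z) = Z := hZ
    have ha : F a Z = Z := by
      funext j
      by_cases hj : j = a
      · subst hj
        calc
          F j Z j = sequentialUpdate F w (F j Z) j := (apply_of_notMem hupd haw _).symm
          _ = Z j := congrFun hZ_cons j
      · exact hupd a Z j hj
    rw [ha] at hZ_cons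
    obtain rfl | hi := List.mem_cons.mp hi
    · exact ha
    · exact ih hw hZ_cons hi

end sequentialUpdate

theorem stmt_4_general {ι : Type*} {α : ι → Type*} [∀ i, Preorder (α i)]
    {F : ι → (∀ i, α i) → ∀ i, α i} (hupd : ∀ i X j, j ≠ i → F i X j = X j)
    (hmono : ∀ i, Monotone (F i)) {w v : List ι} (hw : w.Nodup) (hvw : v ⊆ w)
    {Z : ∀ i, α i} (hZ : IsFixedPt (sequentialUpdate F w) Z) (X : ∀ i, α i) (k : ℕ) :
    (X ≤ Z → (sequentialUpdate F v)^[k] X ≤ Z) ∧ (Z ≤ X → Z ≤ (sequentialUpdate F v)^[k] X) := by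
  have hfix : ∀ i ∈ v, F i Z = Z := fun i hi =>
    sequentialUpdate.isFixedPt_of_mem hupd hw hZ (hvw hi)
  have hIic : MapsTo (sequentialUpdate F v) (Iic Z) (Iic Z) :=
    sequentialUpdate.mapsTo fun i hi Y hY => (hmono i hY).trans_eq (hfix i hi)
  have hIci : MapsTo (sequentialUpdate F v) (Ici Z) (Ici Z) :=
    sequentialUpdate.mapsTo fun i hi Y hY => (hfix i hi).symm.trans_le (hmono i hY)
  exact ⟨fun hX => hIic.iterate k hX, fun hX => hIci.iterate k hX⟩

theorem stmt_4 {n : ℕ} (F : Fin n → (Fin n → Bool) → (Fin n → Bool))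
    (hupd : ∀ (i : Fin n) (X : Fin n → Bool) (j : Fin n), j ≠ i → F i X j = X j)
    (hmono : ∀ i : Fin n, Monotone (F i))
    (π : Equiv.Perm (Fin n)) (Z : Fin n → Bool) (hZ : seqComp F π Z = Z)
    (X : Fin n → Bool) :
    (X ≤ Z → ∀ (σ : Equiv.Perm (Fin n)) (k : ℕ), (seqComp F σ)^[k] X ≤ Z) ∧
    (Z ≤ X → ∀ (σ : Equiv.Perm (Fin n)) (k : ℕ), Z ≤ (seqComp F σ)^[k] X) := by
  rw [seqComp_eq_sequentialUpdate] at hZ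
  simp only [seqComp_eq_sequentialUpdate]
  have hbounds (σ : Equiv.Perm (Fin n)) := stmt_4_general hupd hmono
    ((List.nodup_finRange n).map π.injective)
    (σ.map_finRange_perm.trans π.map_finRange_perm.symm).subset hZ X
  exact ⟨fun hX σ k => (hbounds σ k).1 hX, fun hX σ k => (hbounds σ k).2 hX⟩
end

section
/- Let F : (Fin n → Bool) → (Fin n → Bool) be monotone with respect to the pointwise order. Then there exist fixed points Z_min and Z_max of F (F Z_min = Z_min and F Z_max = Z_max) such that every periodic point X of F (i.e., F^[p] X = X for some p ≥ 1) satisfies Z_min ≤ X ≤ Z_max. -/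
/-!
The rolling rule `f (lfp (f ^ k * f)) = lfp (f * f ^ k)` makes the least fixed point of
`f ^ (k + 1)` a fixed point of `f`, so every positive power of `f` has the same least fixed point
as `f`. A point of period `p > 0` is a fixed point of `f ^ p`, hence lies above that common least
fixed point. The upper bound is the order dual.
-/

open Function

section CompleteLattice

variable {α : Type*} [CompleteLattice α]

theorem lfp_pow_of_ne_zero (f : α →o α) {p : ℕ} (hp : p ≠ 0) : (f ^ p).lfp = f.lfp := by
  obtain ⟨k, rfl⟩ := Nat.exists_eq_succ_of_ne_zero hp
  have map_pow_lfp : (f ^ (k + 1)) f.lfp = f.lfp := by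
    rw [pow_apply_eq_iterate]
    exact f.isFixedPt_lfp.iterate (k + 1)
  have map_lfp_pow : f (f ^ (k + 1)).lfp = (f ^ (k + 1)).lfp := by
    calc
      f (f ^ (k + 1)).lfp = f (f ^ k * f).lfp := by rw [pow_succ]
      _ = (f * f ^ k).lfp := f.map_lfp_comp (f ^ k)
      _ = (f ^ (k + 1)).lfp := by rw [pow_succ']
  exact ((f ^ (k + 1)).lfp_le_fixed map_pow_lfp).antisymm (f.lfp_le_fixed map_lfp_pow)

theorem isLeast_periodicPts_lfp (f : α →o α) : IsLeast (periodicPts f) f.lfp := by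
  refine ⟨mk_mem_periodicPts one_pos (f.isFixedPt_lfp.isPeriodicPt 1), ?_⟩
  rintro x ⟨p, hp, hx : f^[p] x = x⟩
  rw [← pow_apply_eq_iterate] at hx
  calc
    f.lfp = (f ^ p).lfp := (lfp_pow_of_ne_zero f hp.ne').symm
    _ ≤ x := (f ^ p).lfp_le_fixed hx

theorem isGreatest_periodicPts_gfp (f : α →o α) : IsGreatest (periodicPts f) f.gfp :=
  isLeast_periodicPts_lfp f.dual

theorem stmt_5_general (F : α → α) (hF : Monotone F) :
    ∃ Zmin Zmax : α, F Zmin = Zmin ∧ F Zmax = Zmax ∧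
      ∀ X : α, (∃ p : ℕ, 1 ≤ p ∧ F^[p] X = X) → Zmin ≤ X ∧ X ≤ Zmax := by
  let f : α →o α := ⟨F, hF⟩
  refine ⟨f.lfp, f.gfp, f.map_lfp, f.map_gfp, fun X hX ↦ ?_⟩
  have X_mem : X ∈ periodicPts f := hX
  exact ⟨(isLeast_periodicPts_lfp f).2 X_mem, (isGreatest_periodicPts_gfp f).2 X_mem⟩

end CompleteLattice

theorem stmt_5 {n : ℕ}
    (F : (Fin n → Bool) → (Fin n → Bool)) (hF : Monotone F) :
    ∃ Zmin Zmax : Fin n → Bool, F Zmin = Zmin ∧ F Zmax = Zmax ∧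
      ∀ X : Fin n → Bool, (∃ p : ℕ, 1 ≤ p ∧ F^[p] X = X) → Zmin ≤ X ∧ X ≤ Zmax := by
  exact stmt_5_general F hF
end

section
/- Let F : (Fin n → Bool) → (Fin n → Bool) be monotone with respect to the pointwise order. If F has a non-trivial periodic point, i.e., there exist X and p ≥ 1 with F^[p] X = X and F X ≠ X, then F has at least two distinct fixed points: there exist Z₁ ≠ Z₂ with F Z₁ = Z₁ and F Z₂ = Z₂. -/
/-!
Let `f` be a monotone self-map of a complete lattice and `p ≥ 1`. By the rolling rule, `f` fixes the
least fixed point of any `f ∘ g` with `g` commuting with `f`; taking `g = f^[p - 1]` shows that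
`f` and `f^[p]` have the same least fixed point and, dually, the same greatest one. Every
`p`-periodic point of `f` is a fixed point of `f^[p]`, hence lies between these two. If they
coincided, the periodic point would equal both and so be fixed by `f`.
-/

section CompleteLattice

open Function

variable {α : Type*} [CompleteLattice α] {f g : α →o α} {x : α} {p : ℕ}

theorem isFixedPt_lfp_mul_of_commute (h : Commute f g) : IsFixedPt f (f * g).lfp := by
  have rolling : f (g * f).lfp = (f * g).lfp := f.map_lfp_comp g
  rwa [← h.eq] at rolling

theorem lfp_pow (f : α →o α) (hp : p ≠ 0) : (f ^ p).lfp = f.lfp := by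
  apply le_antisymm
  · refine (f ^ p).lfp_le_fixed ?_
    rw [FunLike.coe_pow_eq_iterate]
    exact f.isFixedPt_lfp.iterate p
  · refine f.lfp_le_fixed ?_
    rw [← mul_pow_sub_one hp f]
    exact isFixedPt_lfp_mul_of_commute (Commute.self_pow f (p - 1))

theorem lfp_le_of_isPeriodicPt (hp : p ≠ 0) (hx : IsPeriodicPt f p x) : f.lfp ≤ x := by
  rw [← lfp_pow f hp]
  exact (f ^ p).lfp_le_fixed ((pow_apply_eq_iterate f p x).trans hx)

theorem le_gfp_of_isPeriodicPt (hp : p ≠ 0) (hx : IsPeriodicPt f p x) : x ≤ f.gfp :=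
  lfp_le_of_isPeriodicPt (f := f.dual) hp hx

theorem lfp_ne_gfp_of_isPeriodicPt (hp : p ≠ 0) (hx : IsPeriodicPt f p x)
    (hfx : ¬ IsFixedPt f x) : f.lfp ≠ f.gfp := by
  intro h
  have hle : x ≤ f.lfp := h ▸ le_gfp_of_isPeriodicPt hp hx
  have hx_eq : f.lfp = x := (lfp_le_of_isPeriodicPt hp hx).antisymm hle
  exact hfx (hx_eq ▸ f.isFixedPt_lfp)

theorem stmt_6_general {F : α → α} (hF : Monotone F) (hp : p ≠ 0) (hper : IsPeriodicPt F p x)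
    (hnt : ¬ IsFixedPt F x) : ∃ z₁ z₂ : α, z₁ ≠ z₂ ∧ IsFixedPt F z₁ ∧ IsFixedPt F z₂ :=
  let f : α →o α := ⟨F, hF⟩
  ⟨f.lfp, f.gfp, lfp_ne_gfp_of_isPeriodicPt hp hper hnt, f.isFixedPt_lfp, f.isFixedPt_gfp⟩

end CompleteLattice

theorem stmt_6 {n : ℕ}
    (F : (Fin n → Bool) → (Fin n → Bool)) (hF : Monotone F)
    (X : Fin n → Bool) (p : ℕ) (hp : 1 ≤ p) (hper : F^[p] X = X) (hnt : F X ≠ X) :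
    ∃ Z₁ Z₂ : Fin n → Bool, Z₁ ≠ Z₂ ∧ F Z₁ = Z₁ ∧ F Z₂ = Z₂ :=
  stmt_6_general hF (Nat.one_le_iff_ne_zero.mp hp) hper hnt
end

section
/- Let S be a finite type and let g, h : S → S be arbitrary maps. Then g maps the set of periodic points of h ∘ g bijectively onto the set of periodic points of g ∘ h; that is, g restricted to Per(h ∘ g) := {x | ∃ p ≥ 1, (h ∘ g)^[p] x = x} is an injection onto Per(g ∘ h) := {x | ∃ p ≥ 1, (g ∘ h)^[p] x = x} (Set.BijOn g (Per (h ∘ g)) (Per (g ∘ h))). -/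
open Function Set

section

variable {α β : Type*} (g : α → β) (h : β → α)

theorem mapsTo_periodicPts_comp : MapsTo g (periodicPts (h ∘ g)) (periodicPts (g ∘ h)) :=
  have semiconj : Semiconj g (h ∘ g) (g ∘ h) := fun _ => rfl
  semiconj.mapsTo_periodicPts

theorem injOn_periodicPts_comp : InjOn g (periodicPts (h ∘ g)) :=
  (bijOn_periodicPts (h ∘ g)).injOn.of_comp

theorem surjOn_periodicPts_comp : SurjOn g (periodicPts (h ∘ g)) (periodicPts (g ∘ h)) :=
  (bijOn_periodicPts (g ∘ h)).surjOn.of_comp (mapsTo_periodicPts_comp h g)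

theorem stmt_7_general : BijOn g (periodicPts (h ∘ g)) (periodicPts (g ∘ h)) :=
  ⟨mapsTo_periodicPts_comp g h, injOn_periodicPts_comp g h, surjOn_periodicPts_comp g h⟩

end

theorem stmt_7 {S : Type*} [Finite S] (g h : S → S) :
    Set.BijOn g {x | ∃ p : ℕ, 1 ≤ p ∧ (h ∘ g)^[p] x = x}
      {x | ∃ p : ℕ, 1 ≤ p ∧ (g ∘ h)^[p] x = x} :=
  stmt_7_general g h
end

section
/- Let (F_i)_{i : Fin n} be a family of monotone coordinate-update maps on Fin n → Bool, let π be a permutation of Fin n, and let F_π := F_{π(n-1)} ∘ ⋯ ∘ F_{π(0)}. Let 0 ≤ k ≤ n and suppose X is of type S₀(π,k) or of type S₁(π,k). Then X is a Garden-of-Eden state of F_π (X is not in the range of F_π) or X reaches a fixed point of F_π (there exists m with F_π (F_π^[m] X) = F_π^[m] X). -/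
/-- `X` is of type `S₀(π,k)`: the first `k` vertices in the schedule are `false`, the rest `true`. -/
def isS0 {n : ℕ} (π : Equiv.Perm (Fin n)) (k : ℕ) (X : Fin n → Bool) : Prop :=
  ∀ i : Fin n, (i.val < k → X (π i) = false) ∧ (k ≤ i.val → X (π i) = true)

/-- `X` is of type `S₁(π,k)`: the first `k` vertices in the schedule are `true`, the rest `false`. -/
def isS1 {n : ℕ} (π : Equiv.Perm (Fin n)) (k : ℕ) (X : Fin n → Bool) : Prop :=
  ∀ i : Fin n, (i.val < k → X (π i) = true) ∧ (k ≤ i.val → X (π i) = false)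

/-!
Suppose `X` is a value of the composite of monotone coordinate updates along a word `s ++ t`, with
greatest entries on the letters of `t` and least entries elsewhere. At the last time `v ∈ t` is
updated, the current state is below `X`: it already agrees with `X` off the letters of `t` still to
be processed, and `X` is greatest at those letters. By monotonicity the update at `v` cannot lower
`X`; at `v ∉ t` it cannot lower `X` because `X v` is least. Hence `X` is below its image under the
composite, so its orbit increases and stabilizes. Type `S₁` is type `S₀` for the reversed order.
-/

/-- The composite of the maps `F v` along the word `l`; the head of `l` is applied first. -/
def wordMap {V S : Type*} (F : V → S → S) (l : List V) (X : S) : S :=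
  l.foldl (fun Y v => F v Y) X

section Order

variable {V S : Type*} [Preorder S] {F : V → S → S}

theorem monotone_wordMap (hmono : ∀ v, Monotone (F v)) (l : List V) : Monotone (wordMap F l) :=
  List.foldl_monotone hmono l

theorem le_wordMap (hmono : ∀ v, Monotone (F v)) {X : S} (hX : ∀ v, X ≤ F v X) (l : List V) :
    X ≤ wordMap F l X := by
  induction l with
  | nil => exact le_rfl
  | cons v l ih => exact ih.trans (monotone_wordMap hmono l (hX v))

end Order

theorem exists_isFixedPt_iterate_of_le_map {S : Type*} [PartialOrder S] [WellFoundedGT S]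
    {f : S → S} (hf : Monotone f) {x : S} (hx : x ≤ f x) :
    ∃ m : ℕ, Function.IsFixedPt f (f^[m] x) := by
  obtain ⟨m, hm⟩ :=
    WellFoundedGT.monotone_chain_condition ⟨_, hf.monotone_iterate_of_le_map hx⟩
  exact ⟨m, (Function.iterate_succ_apply' f m x).symm.trans (hm (m + 1) m.le_succ).symm⟩

section CoordUpdate

variable {V : Type*} {α : V → Type*}

/-- `f` is a coordinate-update map at `v`: it changes no entry of a state except the one at `v`. -/
def IsCoordUpdate (v : V) (f : (∀ u, α u) → ∀ u, α u) : Prop :=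
  ∀ X u, u ≠ v → f X u = X u

theorem wordMap_apply_of_notMem {F : V → (∀ u, α u) → ∀ u, α u}
    (hupd : ∀ v, IsCoordUpdate v (F v)) {u : V} {l : List V} (hu : u ∉ l) (X : ∀ u, α u) :
    wordMap F l X u = X u := by
  induction l generalizing X with
  | nil => rfl
  | cons v l ih =>
    obtain ⟨huv, hul⟩ := not_or.mp (mt List.mem_cons.mpr hu)
    exact (ih hul (F v X)).trans (hupd v X u huv)

variable [∀ v, Preorder (α v)]

theorem IsCoordUpdate.le_apply {v : V} {f : (∀ u, α u) → ∀ u, α u} (hf : IsCoordUpdate v f)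
    {X : ∀ u, α u} (hv : X v ≤ f X v) : X ≤ f X := by
  intro u
  obtain rfl | huv := eq_or_ne u v
  · exact hv
  · exact (hf X u huv).ge

/-- A state of type `S₀` for the update word `l`: its entries are greatest on a suffix of `l` and
least at all other vertices. For two-element chains and `l` a permutation, this is the type
`S₀(π, k)` with the suffix starting at position `k`. -/
def IsUpStep (l : List V) (X : ∀ v, α v) : Prop :=
  ∃ t, t <:+ l ∧ (∀ v ∈ t, IsTop (X v)) ∧ ∀ v ∉ t, IsBot (X v)

/-- A state of type `S₁` for the update word `l`: its entries are least on a suffix of `l` and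
greatest at all other vertices. -/
def IsDownStep (l : List V) (X : ∀ v, α v) : Prop :=
  ∃ t, t <:+ l ∧ (∀ v ∈ t, IsBot (X v)) ∧ ∀ v ∉ t, IsTop (X v)

variable {F : V → (∀ u, α u) → ∀ u, α u}

theorem wordMap_le_apply_of_isTop (hupd : ∀ v, IsCoordUpdate v (F v))
    (hmono : ∀ v, Monotone (F v)) {t : List V} {W : ∀ v, α v}
    (htop : ∀ v ∈ t, IsTop (wordMap F t W v)) {v : V} (hv : v ∈ t) :
    wordMap F t W ≤ F v (wordMap F t W) := by
  induction t generalizing W with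
  | nil => simp at hv
  | cons a t ih =>
    by_cases hvt : v ∈ t
    · exact ih (fun u hu => htop u (List.mem_cons_of_mem a hu)) hvt
    obtain rfl : v = a := (List.mem_cons.mp hv).resolve_right hvt
    have hW : W ≤ wordMap F (v :: t) W := fun u => by
      by_cases hu : u ∈ v :: t
      · exact htop u hu _
      · exact (wordMap_apply_of_notMem hupd hu W).ge
    refine (hupd v).le_apply ?_
    calc wordMap F (v :: t) W v = F v W v := wordMap_apply_of_notMem hupd hvt (F v W)
      _ ≤ F v (wordMap F (v :: t) W) v := hmono v hW v

theorem IsUpStep.le_apply_of_mem_range (hupd : ∀ v, IsCoordUpdate v (F v))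
    (hmono : ∀ v, Monotone (F v)) {l : List V} {X : ∀ v, α v} (hX : IsUpStep l X)
    (hrange : X ∈ Set.range (wordMap F l)) (v : V) : X ≤ F v X := by
  obtain ⟨t, ⟨s, rfl⟩, htop, hbot⟩ := hX
  by_cases hv : v ∈ t
  · obtain ⟨Y, rfl⟩ := hrange
    have hsplit : wordMap F (s ++ t) Y = wordMap F t (wordMap F s Y) := List.foldl_append
    rw [hsplit] at htop ⊢
    exact wordMap_le_apply_of_isTop hupd hmono htop hv
  · exact (hupd v).le_apply (hbot v hv _)

end CoordUpdate

section FixedPoint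

variable {V : Type*} {α : V → Type*} [∀ v, PartialOrder (α v)] {F : V → (∀ u, α u) → ∀ u, α u}

theorem IsUpStep.exists_isFixedPt_iterate [WellFoundedGT (∀ v, α v)]
    (hupd : ∀ v, IsCoordUpdate v (F v)) (hmono : ∀ v, Monotone (F v)) {l : List V}
    {X : ∀ v, α v} (hX : IsUpStep l X) (hrange : X ∈ Set.range (wordMap F l)) :
    ∃ m : ℕ, Function.IsFixedPt (wordMap F l) ((wordMap F l)^[m] X) :=
  exists_isFixedPt_iterate_of_le_map (monotone_wordMap hmono l)
    (le_wordMap hmono (hX.le_apply_of_mem_range hupd hmono hrange) l)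

theorem IsDownStep.exists_isFixedPt_iterate [WellFoundedLT (∀ v, α v)]
    (hupd : ∀ v, IsCoordUpdate v (F v)) (hmono : ∀ v, Monotone (F v)) {l : List V}
    {X : ∀ v, α v} (hX : IsDownStep l X) (hrange : X ∈ Set.range (wordMap F l)) :
    ∃ m : ℕ, Function.IsFixedPt (wordMap F l) ((wordMap F l)^[m] X) :=
  have : WellFoundedGT (∀ v, (α v)ᵒᵈ) := inferInstanceAs (WellFoundedGT (∀ v, α v)ᵒᵈ)
  IsUpStep.exists_isFixedPt_iterate (α := fun v => (α v)ᵒᵈ) hupd (fun v => (hmono v).dual) hX hrange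

theorem stmt_8_general [WellFoundedGT (∀ v, α v)] [WellFoundedLT (∀ v, α v)]
    (hupd : ∀ v, IsCoordUpdate v (F v)) (hmono : ∀ v, Monotone (F v)) {l : List V}
    {X : ∀ v, α v} (hX : IsUpStep l X ∨ IsDownStep l X) :
    X ∉ Set.range (wordMap F l) ∨
      ∃ m : ℕ, Function.IsFixedPt (wordMap F l) ((wordMap F l)^[m] X) :=
  or_iff_not_imp_left.mpr fun hrange => hX.elim
    (fun h => h.exists_isFixedPt_iterate hupd hmono (not_not.mp hrange))
    (fun h => h.exists_isFixedPt_iterate hupd hmono (not_not.mp hrange))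

end FixedPoint

section Schedule

variable {n : ℕ} {π : Equiv.Perm (Fin n)} {k : ℕ} {X : Fin n → Bool}

theorem seqComp_eq_wordMap (F : Fin n → (Fin n → Bool) → (Fin n → Bool))
    (π : Equiv.Perm (Fin n)) : seqComp F π = wordMap F ((List.finRange n).map π) :=
  funext fun X => (List.foldl_map (f := π) (g := fun Y v => F v Y) (init := X)).symm

theorem apply_mem_drop_map_finRange_iff {i : Fin n} :
    π i ∈ ((List.finRange n).map π).drop k ↔ k ≤ i := by
  rw [← List.map_drop, List.mem_map_of_injective π.injective, List.mem_drop_iff_getElem]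
  simp only [List.getElem_finRange, List.length_finRange, Fin.ext_iff, Fin.val_cast]
  constructor
  · rintro ⟨j, -, hj⟩
    omega
  · exact fun hki => ⟨i - k, by omega, by omega⟩

theorem isS0.isUpStep (hX : isS0 π k X) : IsUpStep ((List.finRange n).map π) X := by
  refine ⟨_, List.drop_suffix k _, π.surjective.forall.mpr fun i hi => ?_,
    π.surjective.forall.mpr fun i hi => ?_⟩
  · rw [(hX i).2 (apply_mem_drop_map_finRange_iff.mp hi)]
    exact isTop_top
  · rw [(hX i).1 (not_le.mp (mt apply_mem_drop_map_finRange_iff.mpr hi))]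
    exact isBot_bot

theorem isS1.isDownStep (hX : isS1 π k X) : IsDownStep ((List.finRange n).map π) X := by
  refine ⟨_, List.drop_suffix k _, π.surjective.forall.mpr fun i hi => ?_,
    π.surjective.forall.mpr fun i hi => ?_⟩
  · rw [(hX i).2 (apply_mem_drop_map_finRange_iff.mp hi)]
    exact isBot_bot
  · rw [(hX i).1 (not_le.mp (mt apply_mem_drop_map_finRange_iff.mpr hi))]
    exact isTop_top

end Schedule

theorem stmt_8 {n : ℕ} (F : Fin n → (Fin n → Bool) → (Fin n → Bool))
    (hupd : ∀ (i : Fin n) (X : Fin n → Bool) (j : Fin n), j ≠ i → F i X j = X j)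
    (hmono : ∀ i : Fin n, Monotone (F i))
    (π : Equiv.Perm (Fin n)) (k : ℕ) (hk : k ≤ n)
    (X : Fin n → Bool) (hX : isS0 π k X ∨ isS1 π k X) :
    X ∉ Set.range (seqComp F π) ∨
      ∃ m : ℕ, seqComp F π ((seqComp F π)^[m] X) = (seqComp F π)^[m] X := by
  rw [seqComp_eq_wordMap]
  exact stmt_8_general hupd hmono (hX.imp isS0.isUpStep isS1.isDownStep)
end

section
/- Let (F_i)_{i : Fin n} be a family of monotone coordinate-update maps on Fin n → Bool, let π be a permutation of Fin n, and let F_π := F_{π(n-1)} ∘ ⋯ ∘ F_{π(0)}. Let 0 ≤ k ≤ n and suppose X is of type S₀(π,k) or of type S₁(π,k). Then X cannot be a non-trivial periodic point of F_π: if F_π^[p] X = X for some p ≥ 1, then F_π X = X. -/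
/-!
If the first block of the schedule acts as `f` and the second as `g`, a periodic point `X` has the
form `g (f Z)`. For `X` of type `S₀`, the map `g` changes only coordinates where `X` is largest and
`f` only coordinates where `X` is smallest, so `f Z ≤ g (f Z) = X ≤ f X`. Applying the monotone map
`g` gives `X ≤ g (f X)`, and a periodic point that a monotone map moves upwards is fixed. Type `S₁`
is the same argument in the dual order.
-/

open Function

theorem isFixedPt_of_le_map_of_isPeriodicPt {β : Type*} [PartialOrder β] {f : β → β} {x : β} {p : ℕ}
    (hf : Monotone f) (hx : x ≤ f x) (hp : 0 < p) (hper : IsPeriodicPt f p x) : IsFixedPt f x := by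
  have hle : f x ≤ f^[p] x := hf.monotone_iterate_of_le_map hx (Nat.one_le_of_lt hp)
  exact le_antisymm (hle.trans_eq hper) hx

section Updates

variable {V : Type*} {α : V → Type*}

/-- The map `f` on states changes at most the coordinates in `s`; a coordinate-update map at `v` is
the case `s = {v}`. -/
def UpdatesOnly (f : (∀ v, α v) → ∀ v, α v) (s : Set V) : Prop :=
  ∀ X, ∀ v ∉ s, f X v = X v

/-- The sequential dynamical system map that applies the local maps `F v` for `v` in the word `l`,
the head of `l` first. Vertices may be repeated or omitted. -/
def runSchedule (F : V → (∀ v, α v) → ∀ v, α v) (l : List V) (X : ∀ v, α v) : ∀ v, α v :=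
  l.foldl (fun Y v => F v Y) X

theorem runSchedule_append (F : V → (∀ v, α v) → ∀ v, α v) (l₁ l₂ : List V) :
    runSchedule F (l₁ ++ l₂) = runSchedule F l₂ ∘ runSchedule F l₁ :=
  funext fun _ => List.foldl_append

theorem updatesOnly_runSchedule {F : V → (∀ v, α v) → ∀ v, α v}
    (hF : ∀ v, UpdatesOnly (F v) {v}) (l : List V) : UpdatesOnly (runSchedule F l) {v | v ∈ l} := by
  induction l with
  | nil => exact fun _ _ _ => rfl
  | cons w l ih =>
    intro X v hv
    obtain ⟨hvw, hvl⟩ := not_or.1 (List.mem_cons.not.1 hv)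
    exact (ih (F w X) v hvl).trans (hF w X v hvw)

/-- The state `X` is smallest on `s` and largest on `t`. When `s` and `t` are the first and the
second block of a schedule this is type `S₀`; exchanging `s` and `t` gives type `S₁`. -/
def IsBotTopOn [∀ v, LE (α v)] (s t : Set V) (X : ∀ v, α v) : Prop :=
  (∀ v ∈ s, IsBot (X v)) ∧ ∀ v ∈ t, IsTop (X v)

section Preorder

variable [∀ v, Preorder (α v)]

theorem monotone_runSchedule {F : V → (∀ v, α v) → ∀ v, α v} (hF : ∀ v, Monotone (F v))
    (l : List V) : Monotone (runSchedule F l) := by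
  induction l with
  | nil => exact monotone_id
  | cons w l ih => exact ih.comp (hF w)

variable {f g : (∀ v, α v) → ∀ v, α v} {s t : Set V} {X : ∀ v, α v}

theorem UpdatesOnly.le_map_of_isBot (hf : UpdatesOnly f s) (hX : ∀ v ∈ s, IsBot (X v)) :
    X ≤ f X := by
  intro v
  by_cases hv : v ∈ s
  · exact hX v hv (f X v)
  · exact (hf X v hv).ge

theorem UpdatesOnly.le_map_of_isTop_map (hf : UpdatesOnly f s) (hX : ∀ v ∈ s, IsTop (f X v)) :
    X ≤ f X := by
  intro v
  by_cases hv : v ∈ s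
  · exact hX v hv (X v)
  · exact (hf X v hv).ge

theorem IsBotTopOn.le_comp_of_mem_range (hX : IsBotTopOn s t X) (hf : UpdatesOnly f s)
    (hg : UpdatesOnly g t) (hg_mono : Monotone g) (hrange : X ∈ Set.range (g ∘ f)) :
    X ≤ (g ∘ f) X := by
  obtain ⟨Z, rfl⟩ := hrange
  have hle : f Z ≤ g (f Z) := hg.le_map_of_isTop_map hX.2
  exact hg_mono (hle.trans (hf.le_map_of_isBot hX.1))

end Preorder

section PartialOrder

variable [∀ v, PartialOrder (α v)] {f g : (∀ v, α v) → ∀ v, α v} {s t : Set V} {X : ∀ v, α v}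
  {p : ℕ}

theorem IsBotTopOn.isFixedPt_comp (hX : IsBotTopOn s t X) (hf : UpdatesOnly f s)
    (hg : UpdatesOnly g t) (hf_mono : Monotone f) (hg_mono : Monotone g) (hp : 0 < p)
    (hper : IsPeriodicPt (g ∘ f) p X) : IsFixedPt (g ∘ f) X := by
  obtain ⟨Z, -, hZ⟩ := (bijOn_periodicPts (g ∘ f)).surjOn (mk_mem_periodicPts hp hper)
  exact isFixedPt_of_le_map_of_isPeriodicPt (hg_mono.comp hf_mono)
    (hX.le_comp_of_mem_range hf hg hg_mono ⟨Z, hZ⟩) hp hper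

theorem IsBotTopOn.isFixedPt_comp_dual (hX : IsBotTopOn t s X) (hf : UpdatesOnly f s)
    (hg : UpdatesOnly g t) (hf_mono : Monotone f) (hg_mono : Monotone g) (hp : 0 < p)
    (hper : IsPeriodicPt (g ∘ f) p X) : IsFixedPt (g ∘ f) X :=
  have hX_dual : IsBotTopOn (α := fun v => (α v)ᵒᵈ) s t X := hX.symm
  hX_dual.isFixedPt_comp hf hg hf_mono.dual hg_mono.dual hp hper

theorem stmt_10_general {F : V → (∀ v, α v) → ∀ v, α v} (hupd : ∀ v, UpdatesOnly (F v) {v})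
    (hmono : ∀ v, Monotone (F v)) {l₁ l₂ : List V}
    (hX : IsBotTopOn {v | v ∈ l₁} {v | v ∈ l₂} X ∨ IsBotTopOn {v | v ∈ l₂} {v | v ∈ l₁} X)
    (hp : 0 < p) (hper : IsPeriodicPt (runSchedule F (l₁ ++ l₂)) p X) :
    IsFixedPt (runSchedule F (l₁ ++ l₂)) X := by
  rw [runSchedule_append] at hper ⊢
  have hl := updatesOnly_runSchedule hupd
  have hl_mono := monotone_runSchedule hmono
  rcases hX with hX | hX
  · exact hX.isFixedPt_comp (hl l₁) (hl l₂) (hl_mono l₁) (hl_mono l₂) hp hper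
  · exact hX.isFixedPt_comp_dual (hl l₁) (hl l₂) (hl_mono l₁) (hl_mono l₂) hp hper

end PartialOrder

end Updates

theorem forall_mem_take_ofFn {n : ℕ} {β : Type*} {u : Fin n → β} {k : ℕ} {P : β → Prop} :
    (∀ x ∈ (List.ofFn u).take k, P x) ↔ ∀ i : Fin n, i.val < k → P (u i) := by
  simp only [List.mem_take_iff_getElem, List.getElem_ofFn, List.length_ofFn]
  refine ⟨fun h i hi => h (u i) ⟨i, lt_min hi i.isLt, rfl⟩, ?_⟩
  rintro h _ ⟨j, hj, rfl⟩
  exact h _ (lt_min_iff.1 hj).1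

theorem forall_mem_drop_ofFn {n : ℕ} {β : Type*} {u : Fin n → β} {k : ℕ} {P : β → Prop} :
    (∀ x ∈ (List.ofFn u).drop k, P x) ↔ ∀ i : Fin n, k ≤ i.val → P (u i) := by
  simp only [List.mem_drop_iff_getElem, List.getElem_ofFn, List.length_ofFn]
  refine ⟨fun h i hi => h (u i) ⟨i - k, by lia, by simp only [Nat.add_sub_cancel' hi]⟩, ?_⟩
  rintro h _ ⟨j, hj, rfl⟩
  exact h _ (Nat.le_add_right k j)

theorem seqComp_eq_runSchedule {n : ℕ} (F : Fin n → (Fin n → Bool) → (Fin n → Bool))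
    (π : Equiv.Perm (Fin n)) (k : ℕ) :
    seqComp F π = runSchedule F ((List.ofFn π).take k ++ (List.ofFn π).drop k) := by
  funext X
  rw [List.take_append_drop, List.ofFn_eq_map, runSchedule, List.foldl_map, seqComp]

section Types

variable {n k : ℕ} {π : Equiv.Perm (Fin n)} {X : Fin n → Bool}

theorem isS0.isBotTopOn (hX : isS0 π k X) :
    IsBotTopOn {v | v ∈ (List.ofFn π).take k} {v | v ∈ (List.ofFn π).drop k} X :=
  ⟨forall_mem_take_ofFn.2 fun i hi => (hX i).1 hi ▸ isBot_bot,
    forall_mem_drop_ofFn.2 fun i hi => (hX i).2 hi ▸ isTop_top⟩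

theorem isS1.isBotTopOn (hX : isS1 π k X) :
    IsBotTopOn {v | v ∈ (List.ofFn π).drop k} {v | v ∈ (List.ofFn π).take k} X :=
  ⟨forall_mem_drop_ofFn.2 fun i hi => (hX i).2 hi ▸ isBot_bot,
    forall_mem_take_ofFn.2 fun i hi => (hX i).1 hi ▸ isTop_top⟩

end Types

theorem stmt_10 {n : ℕ} (F : Fin n → (Fin n → Bool) → (Fin n → Bool))
    (hupd : ∀ (i : Fin n) (X : Fin n → Bool) (j : Fin n), j ≠ i → F i X j = X j)
    (hmono : ∀ i : Fin n, Monotone (F i))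
    (π : Equiv.Perm (Fin n)) (k : ℕ) (hk : k ≤ n)
    (X : Fin n → Bool) (hX : isS0 π k X ∨ isS1 π k X)
    (p : ℕ) (hp : 1 ≤ p) (hper : (seqComp F π)^[p] X = X) :
    seqComp F π X = X := by
  rw [seqComp_eq_runSchedule F π k] at hper ⊢
  exact stmt_10_general hupd hmono (hX.imp isS0.isBotTopOn isS1.isBotTopOn) hp hper
end

section
/- Let (F_i)_{i : Fin n} be a family of monotone coordinate-update maps on Fin n → Bool, and let X : Fin n → Bool be a state having exactly m coordinates equal to false, where 0 < m < n. Then the number of permutations π of Fin n such that X is a Garden-of-Eden state of F_π or X reaches a fixed point of F_π is at least 2 · m! · (n − m)!. -/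
/-!
Suppose the schedule first updates the coordinates where `X` is least and then those where `X` is
greatest. The first phase can only raise `X`. If `X` is the image of `Y`, then the second phase
leads from an intermediate state `W` to `X` and only touches coordinates where `X` is greatest, so
`W ≤ X`; by monotonicity the second phase sends `X` above the image of `W`, which is `X`. Hence
`X ≤ F X`, and the monotone orbit of `X` stabilises. Reversing the order handles the schedules that
update the two blocks of coordinates the other way round.
-/

section FixedPoint

open Function

/-- The orbit of `x` under the self-map `G` contains a fixed point of `G`. -/
def ReachesFixedPt {β : Type*} (G : β → β) (x : β) : Prop :=
  ∃ k : ℕ, IsFixedPt G (G^[k] x)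

theorem reachesFixedPt_of_le_map {β : Type*} [PartialOrder β] [WellFoundedGT β] {G : β → β}
    (hG : Monotone G) {x : β} (hx : x ≤ G x) : ReachesFixedPt G x := by
  let orbit : ℕ →o β := ⟨fun k ↦ G^[k] x, hG.monotone_iterate_of_le_map hx⟩
  obtain ⟨k, hk⟩ := WellFoundedGT.monotone_chain_condition orbit
  have hstable : G^[k] x = G^[k + 1] x := hk (k + 1) k.le_succ
  exact ⟨k, (iterate_succ_apply' G k x).symm.trans hstable.symm⟩

end FixedPoint

section Sweep

variable {ι : Type*} {α : ι → Type*} {F : ι → (∀ i, α i) → ∀ i, α i} {X : ∀ i, α i}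
  {l l₁ l₂ : List ι}

/-- The sequential composition of the coordinate maps `F i` along the list `l`, whose head is
updated first. -/
def sweep (F : ι → (∀ i, α i) → ∀ i, α i) (l : List ι) (X : ∀ i, α i) : ∀ i, α i :=
  l.foldl (fun Y i ↦ F i Y) X

theorem sweep_append (F : ι → (∀ i, α i) → ∀ i, α i) (l₁ l₂ : List ι) (X : ∀ i, α i) :
    sweep F (l₁ ++ l₂) X = sweep F l₂ (sweep F l₁ X) :=
  List.foldl_append

theorem seqComp_eq_sweep {n : ℕ} (F : Fin n → (Fin n → Bool) → (Fin n → Bool))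
    (π : Equiv.Perm (Fin n)) : seqComp F π = sweep F ((List.finRange n).map π) :=
  funext fun X ↦ (List.foldl_map (f := π) (g := fun Y i ↦ F i Y) (init := X)).symm

theorem sweep_apply_of_notMem (hF : ∀ i Y j, j ≠ i → F i Y j = Y j) {j : ι} (hj : j ∉ l) :
    sweep F l X j = X j := by
  induction l generalizing X with
  | nil => rfl
  | cons i l ih =>
    rw [List.mem_cons, not_or] at hj
    exact (ih hj.2).trans (hF i X j hj.1)

theorem le_sweep_of_forall_mem [∀ i, Preorder (α i)] (hF : ∀ i Y j, j ≠ i → F i Y j = Y j)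
    (h : ∀ i ∈ l, X i ≤ sweep F l X i) : X ≤ sweep F l X := fun i ↦ by
  by_cases hi : i ∈ l
  · exact h i hi
  · exact (sweep_apply_of_notMem hF hi).ge

theorem monotone_sweep [∀ i, Preorder (α i)] (hmono : ∀ i, Monotone (F i)) (l : List ι) :
    Monotone (sweep F l) :=
  List.foldl_monotone hmono l

theorem le_sweep_append_of_mem_range [∀ i, Preorder (α i)]
    (hF : ∀ i Y j, j ≠ i → F i Y j = Y j) (hmono : ∀ i, Monotone (F i))
    (hbot : ∀ i ∈ l₁, IsBot (X i)) (htop : ∀ i ∈ l₂, IsTop (X i))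
    (hX : X ∈ Set.range (sweep F (l₁ ++ l₂))) : X ≤ sweep F (l₁ ++ l₂) X := by
  obtain ⟨Y, hY⟩ := hX
  rw [sweep_append] at hY ⊢
  have hW : sweep F l₁ Y ≤ X := by
    rw [← hY] at htop
    exact (le_sweep_of_forall_mem hF fun i hi ↦ htop i hi _).trans_eq hY
  have hraise : X ≤ sweep F l₁ X := le_sweep_of_forall_mem hF fun i hi ↦ hbot i hi _
  calc
    X = sweep F l₂ (sweep F l₁ Y) := hY.symm
    _ ≤ sweep F l₂ X := monotone_sweep hmono l₂ hW
    _ ≤ sweep F l₂ (sweep F l₁ X) := monotone_sweep hmono l₂ hraise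

end Sweep

section Schedule

open Finset Numbering

variable {ι : Type*} [Fintype ι] {f : Numbering ι} {S : Finset ι}

theorem exists_map_finRange_eq_append_of_isPrefix (hf : f.IsPrefix S) :
    ∃ l₁ l₂ : List ι, (List.finRange (Fintype.card ι)).map f.symm = l₁ ++ l₂ ∧
      (∀ i ∈ l₁, i ∈ S) ∧ ∀ i ∈ l₂, i ∉ S := by
  refine ⟨((List.finRange _).take #S).map f.symm, ((List.finRange _).drop #S).map f.symm,
    by rw [← List.map_append, List.take_append_drop], ?_, ?_⟩
  · simp only [List.forall_mem_map, hf _, Equiv.apply_symm_apply]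
    intro j hj
    rwa [List.mem_take_iff_idxOf_lt (List.mem_finRange j), List.idxOf_finRange] at hj
  · simp only [List.forall_mem_map, hf _, Equiv.apply_symm_apply, not_lt]
    intro j hj
    obtain ⟨k, hk, rfl⟩ := List.mem_drop_iff_getElem.1 hj
    simp

variable {α : ι → Type*} [∀ i, PartialOrder (α i)]
  {F : ι → (∀ i, α i) → ∀ i, α i} {X : ∀ i, α i}

theorem reachesFixedPt_sweep_of_isPrefix [∀ i, WellFoundedGT (α i)]
    (hF : ∀ i Y j, j ≠ i → F i Y j = Y j) (hmono : ∀ i, Monotone (F i))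
    (hbot : ∀ i ∈ S, IsBot (X i)) (htop : ∀ i ∉ S, IsTop (X i)) (hf : f.IsPrefix S)
    (hX : X ∈ Set.range (sweep F ((List.finRange _).map f.symm))) :
    ReachesFixedPt (sweep F ((List.finRange _).map f.symm)) X := by
  obtain ⟨l₁, l₂, hl, hl₁, hl₂⟩ := exists_map_finRange_eq_append_of_isPrefix hf
  rw [hl] at hX ⊢
  have : WellFoundedGT (∀ i, α i) := ⟨(Pi.wellFoundedLT (α := fun i ↦ (α i)ᵒᵈ)).wf⟩
  exact reachesFixedPt_of_le_map (monotone_sweep hmono _) <|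
    le_sweep_append_of_mem_range hF hmono (fun i hi ↦ hbot i (hl₁ i hi))
      (fun i hi ↦ htop i (hl₂ i hi)) hX

theorem reachesFixedPt_sweep_of_isPrefix_compl [DecidableEq ι] [∀ i, WellFoundedLT (α i)]
    (hF : ∀ i Y j, j ≠ i → F i Y j = Y j) (hmono : ∀ i, Monotone (F i))
    (hbot : ∀ i ∈ S, IsBot (X i)) (htop : ∀ i ∉ S, IsTop (X i)) (hf : f.IsPrefix Sᶜ)
    (hX : X ∈ Set.range (sweep F ((List.finRange _).map f.symm))) :
    ReachesFixedPt (sweep F ((List.finRange _).map f.symm)) X :=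
  reachesFixedPt_sweep_of_isPrefix (α := fun i ↦ (α i)ᵒᵈ) hF (fun i ↦ (hmono i).dual)
    (fun i hi ↦ htop i (mem_compl.1 hi)) (fun i hi ↦ hbot i (notMem_compl.1 hi)) hf hX

theorem card_prefixed_union_prefixed_compl [DecidableEq ι] (hS : S.Nonempty) (hS' : S ≠ univ) :
    #(prefixed S ∪ prefixed Sᶜ) =
      2 * Nat.factorial #S * Nat.factorial (Fintype.card ι - #S) := by
  have hdisj : Disjoint (prefixed S) (prefixed Sᶜ) :=
    disjoint_prefixed_prefixed (le_compl_self.not.2 hS.ne_empty) (compl_le_self.not.2 hS')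
  rw [card_union_of_disjoint hdisj, card_prefixed, card_prefixed, card_compl,
    Nat.sub_sub_self S.card_le_univ]
  ring

end Schedule

open Finset in
theorem stmt_13_general {ι : Type*} [Fintype ι] {n : ℕ} (hn : Fintype.card ι = n)
    {α : ι → Type*} [∀ i, PartialOrder (α i)] [∀ i, WellFoundedLT (α i)]
    [∀ i, WellFoundedGT (α i)] (F : ι → (∀ i, α i) → ∀ i, α i)
    (hF : ∀ i Y j, j ≠ i → F i Y j = Y j) (hmono : ∀ i, Monotone (F i))
    (X : ∀ i, α i) (S : Finset ι) (hS : S.Nonempty) (hS' : S ≠ univ)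
    (hbot : ∀ i ∈ S, IsBot (X i)) (htop : ∀ i ∉ S, IsTop (X i)) :
    2 * Nat.factorial #S * Nat.factorial (n - #S) ≤
      {π : Fin n ≃ ι | X ∉ Set.range (sweep F ((List.finRange n).map π)) ∨
        ReachesFixedPt (sweep F ((List.finRange n).map π)) X}.ncard := by
  classical
  subst hn
  rw [← card_prefixed_union_prefixed_compl hS hS', ← Set.ncard_coe_finset]
  refine Set.ncard_le_ncard_of_injOn Equiv.symm (fun f hf ↦ ?_) Equiv.symm_bijective.injective.injOn
  refine or_iff_not_imp_left.2 fun hX ↦ ?_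
  rcases mem_union.1 hf with hf | hf <;> rw [Numbering.mem_prefixed] at hf
  · exact reachesFixedPt_sweep_of_isPrefix hF hmono hbot htop hf (not_not.1 hX)
  · exact reachesFixedPt_sweep_of_isPrefix_compl hF hmono hbot htop hf (not_not.1 hX)

theorem stmt_13 {n : ℕ} (F : Fin n → (Fin n → Bool) → (Fin n → Bool))
    (hupd : ∀ (i : Fin n) (X : Fin n → Bool) (j : Fin n), j ≠ i → F i X j = X j)
    (hmono : ∀ i : Fin n, Monotone (F i))
    (X : Fin n → Bool) (m : ℕ) (hm0 : 0 < m) (hmn : m < n)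
    (hX : (Finset.univ.filter fun i : Fin n => X i = false).card = m) :
    2 * Nat.factorial m * Nat.factorial (n - m) ≤
      ({π : Equiv.Perm (Fin n) |
        X ∉ Set.range (seqComp F π) ∨
        ∃ k : ℕ, seqComp F π ((seqComp F π)^[k] X) = (seqComp F π)^[k] X}).ncard := by
  subst hX
  simp only [seqComp_eq_sweep]
  refine stmt_13_general (Fintype.card_fin n) F hupd hmono X _ (Finset.card_pos.1 hm0) ?_ ?_ ?_
  · exact fun h ↦ hmn.ne (by rw [h, Finset.card_univ, Fintype.card_fin])
  · exact fun i hi ↦ isBot_iff_eq_bot.2 (Finset.mem_filter.1 hi).2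
  · exact fun i hi ↦ isTop_iff_eq_top.2 (by simpa using hi)
end

section
/- For every n ≥ 1 there exist a monotone map F : (Fin n → Bool) → (Fin n → Bool) (pointwise order) and a state X : Fin n → Bool such that X is a periodic point of F (F^[p] X = X for some p ≥ 1) and the orbit {Y | ∃ k, F^[k] X = Y} has cardinality exactly choose(n, ⌊n/2⌋); that is, F has a limit cycle of length choose(n, ⌊n/2⌋). -/
/-!
A monotone map sends comparable states to comparable states, so its behaviour on an antichain is
unconstrained: in a complete lattice, any self-map of an antichain extends to a monotone map of the
whole lattice. Extending a cyclic permutation of an antichain of size `ℓ` yields a limit cycle of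
length `ℓ`, and the middle layer of the Boolean lattice is an antichain of size `choose n (n / 2)`.
-/

theorem exists_monotone_eqOn_of_monotoneOn {α β : Type*} [Preorder α] [CompleteLattice β]
    {f : α → β} {s : Set α} (hf : MonotoneOn f s) :
    ∃ F : α → β, Monotone F ∧ Set.EqOn F f s := by
  refine ⟨fun x ↦ sSup (f '' (s ∩ Set.Iic x)), fun x y hxy ↦ ?_, fun x hx ↦ ?_⟩
  · exact sSup_le_sSup (Set.image_mono (Set.inter_subset_inter_right s (Set.Iic_subset_Iic.2 hxy)))
  · have h_greatest : IsGreatest (s ∩ Set.Iic x) x := ⟨⟨hx, le_rfl⟩, fun _ hy ↦ hy.2⟩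
    exact ((hf.mono Set.inter_subset_left).map_isGreatest h_greatest).isLUB.sSup_eq

theorem monotoneOn_of_isAntichain {α β : Type*} [Preorder α] [Preorder β] {s : Set α}
    (hs : IsAntichain (· ≤ ·) s) (f : α → β) : MonotoneOn f s :=
  fun _ ha _ hb hab ↦ (congrArg f (hs.eq ha hb hab)).le

theorem eqOn_iterate_of_eqOn_of_mapsTo {α : Type*} {f g : α → α} {s : Set α}
    (hfg : Set.EqOn f g s) (hg : Set.MapsTo g s s) (k : ℕ) : Set.EqOn f^[k] g^[k] s := by
  intro x hx
  induction k with
  | zero => rfl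
  | succ k ih =>
    rw [Function.iterate_succ_apply', Function.iterate_succ_apply', ih, hfg (hg.iterate k hx)]

theorem exists_monotone_range_iterate_eq_of_isAntichain {α : Type*} [CompleteLattice α]
    {s : Finset α} (hs : IsAntichain (· ≤ ·) (s : Set α)) {x : α} (hx : x ∈ s) :
    ∃ F : α → α, Monotone F ∧ x ∈ Function.periodicPts F ∧ Set.range (fun k ↦ F^[k] x) = s := by
  obtain ⟨σ, hσ, -⟩ := s.countable_toSet.exists_cycleOn
  obtain ⟨F, hF, hFσ⟩ := exists_monotone_eqOn_of_monotoneOn (monotoneOn_of_isAntichain hs σ)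
  have h_iterate (k : ℕ) : F^[k] x = (σ ^ k) x := by
    rw [eqOn_iterate_of_eqOn_of_mapsTo hFσ hσ.1.mapsTo k hx, Equiv.Perm.iterate_eq_pow]
  have h_return : F^[s.card] x = x := (h_iterate s.card).trans (hσ.pow_card_apply hx)
  refine ⟨F, hF, Function.mk_mem_periodicPts (Finset.card_pos.2 ⟨x, hx⟩) h_return, ?_⟩
  simpa only [h_iterate] using hσ.range_pow s.finite_toSet hx

/-- The order embedding sending a finset `A` to its indicator function, i.e. to the Boolean state
whose components equal to `true` are exactly those in `A`. -/
def boolIndicatorEmbedding (ι : Type*) [DecidableEq ι] : Finset ι ↪o (ι → Bool) :=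
  OrderEmbedding.ofMapLEIff (fun A i ↦ decide (i ∈ A)) fun A B ↦ by
    simp [Pi.le_def, Bool.le_iff_imp, Finset.subset_iff]

theorem exists_isAntichain_card_eq (ι : Type*) [Fintype ι] {ℓ : ℕ}
    (hℓ : ℓ ≤ (Fintype.card ι).choose (Fintype.card ι / 2)) :
    ∃ s : Finset (ι → Bool), IsAntichain (· ≤ ·) (s : Set (ι → Bool)) ∧ s.card = ℓ := by
  classical
  rw [← Finset.card_univ, ← Finset.card_powersetCard] at hℓ
  obtain ⟨𝒜, h𝒜, rfl⟩ := Finset.exists_subset_card_eq hℓ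
  have h_antichain : IsAntichain (· ≤ ·) (𝒜 : Set (Finset ι)) :=
    (Set.sized_powersetCard _ _).isAntichain.subset (Finset.coe_subset.2 h𝒜)
  refine ⟨𝒜.map (boolIndicatorEmbedding ι).toEmbedding, ?_, Finset.card_map _⟩
  rw [Finset.coe_map]
  exact h_antichain.image_embedding (boolIndicatorEmbedding ι)

theorem stmt_17_general (ι : Type*) [Fintype ι] {ℓ : ℕ} (hpos : 1 ≤ ℓ)
    (hℓ : ℓ ≤ (Fintype.card ι).choose (Fintype.card ι / 2)) :
    ∃ (F : (ι → Bool) → (ι → Bool)) (X : ι → Bool),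
      Monotone F ∧ (∃ p : ℕ, 1 ≤ p ∧ F^[p] X = X) ∧
      ({Y : ι → Bool | ∃ k : ℕ, F^[k] X = Y}).ncard = ℓ := by
  obtain ⟨s, hs, rfl⟩ := exists_isAntichain_card_eq ι hℓ
  obtain ⟨X, hX⟩ := Finset.card_pos.1 hpos
  obtain ⟨F, hF, h_periodic, h_orbit⟩ := exists_monotone_range_iterate_eq_of_isAntichain hs hX
  exact ⟨F, X, hF, h_periodic, (congrArg Set.ncard h_orbit).trans (Set.ncard_coe_finset s)⟩

theorem stmt_17 (n : ℕ) (hn : 1 ≤ n) :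
    ∃ (F : (Fin n → Bool) → (Fin n → Bool)) (X : Fin n → Bool),
      Monotone F ∧ (∃ p : ℕ, 1 ≤ p ∧ F^[p] X = X) ∧
      ({Y : Fin n → Bool | ∃ k : ℕ, F^[k] X = Y}).ncard = Nat.choose n (n / 2) :=
  stmt_17_general (Fin n) (Nat.choose_pos (Nat.div_le_self n 2)) (by rw [Fintype.card_fin])
end
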